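/- arXiv:math-ph/0602017 — 2 statements merged into one kernel-verified Lean document; each statement's English description precedes it below -/
import Mathlib

section
/- With the notation of the context, the function h₊ is (complex-)differentiable at z and satisfies h₊(z) = 1 and h₊'(z) = 0. (This is the algebraic content of the vanishing of the first-order term in the diagonal expansion of the Szegő kernel S[e_{m+1}] of Corollary 4.4, equivalently of the vanishing (4.24) of all first partial derivatives of θ[e_{m+1}] at 0.) -/
open Finset

/-! Every factor `ψ_k ^ e`, where `ψ_k w = (z - λ_k) / (w - λ_k)`, takes the value `1` at `w = z`
and has derivative `-e / (z - λ_k)` there. Among functions with value `1` at `z`, products add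
derivatives and means average them, so `hplus z = 1` and the derivative of `hplus` at `z` is a
combination of the means over `s` of the exponents `a s`, `b s`, `c s`. Each of these means
vanishes, because the fractional parts of `(s + r) / N`, for an integer `r`, run over a full period
through `0, 1/N, …, (N-1)/N`, whose mean is `(N-1) / (2N)`. -/

section FractionalParts

lemma sum_range_natCast {R : Type*} [Field R] [NeZero (2 : R)] (N : ℕ) :
    ∑ s ∈ range N, (s : R) = N * (N - 1) / 2 := by
  induction N with
  | zero => simp
  | succ N ih =>
    rw [sum_range_succ, ih]
    push_cast
    field_simp
    ring

lemma sum_range_sub_natCast_div {R : Type*} [Field R] [CharZero R] {N : ℕ} (hN : N ≠ 0) :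
    ∑ s ∈ range N, (((N : R) - 1) / (2 * N) - s / N) = 0 := by
  have hNR : (N : R) ≠ 0 := Nat.cast_ne_zero.2 hN
  rw [sum_sub_distrib, ← sum_div _ (fun s : ℕ ↦ (s : R)), sum_range_natCast, sum_const,
    card_range, nsmul_eq_mul]
  field_simp
  ring

variable {R : Type*} [Field R] [LinearOrder R] [IsStrictOrderedRing R] [FloorRing R] {N : ℕ}

lemma periodic_sum_range_fract_add_div (hN : N ≠ 0) :
    Function.Periodic (fun x : R ↦ ∑ s ∈ range N, Int.fract ((s + x) / N)) 1 := by
  intro x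
  have hNR : (N : R) ≠ 0 := Nat.cast_ne_zero.2 hN
  have wrap : Int.fract ((N + x) / N) = Int.fract (((0 : ℕ) + x) / N) := by
    rw [add_div, div_self hNR, Int.fract_one_add, Nat.cast_zero, zero_add]
  calc ∑ s ∈ range N, Int.fract ((s + (x + 1)) / N)
      = ∑ s ∈ range N, Int.fract (((s + 1 : ℕ) + x) / N) := by
        simp only [Nat.cast_succ, add_assoc, add_comm x 1]
    _ = ∑ s ∈ range N, Int.fract ((s + x) / N) := by
        apply add_right_cancel (b := Int.fract (((0 : ℕ) + x) / N))
        rw [← sum_range_succ' (fun s : ℕ ↦ Int.fract (((s : R) + x) / N)), sum_range_succ, wrap]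

/-- Raabe's multiplication formula for the first Bernoulli function `Int.fract x - 1 / 2`. -/
lemma sum_range_fract_add_div (hN : N ≠ 0) (x : R) :
    ∑ s ∈ range N, Int.fract ((s + x) / N) = (N - 1) / 2 + Int.fract x := by
  have hpos : (0 : R) < N := Nat.cast_pos.2 (Nat.pos_of_ne_zero hN)
  have reduce : ∑ s ∈ range N, Int.fract ((s + x) / N) =
      ∑ s ∈ range N, Int.fract ((s + Int.fract x) / N) := by
    simpa [Int.self_sub_floor] using
      ((periodic_sum_range_fract_add_div hN).sub_zsmul_eq ⌊x⌋ (x := x)).symm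
  have fract_eq : ∀ s ∈ range N,
      Int.fract ((s + Int.fract x) / N) = (s + Int.fract x) / N := by
    intro s hs
    have hsN : (s : R) + 1 ≤ N := by exact_mod_cast mem_range.1 hs
    have := Int.fract_nonneg x
    have := Int.fract_lt_one x
    exact Int.fract_eq_self.2 ⟨by positivity, (div_lt_one hpos).2 (by linarith)⟩
  rw [reduce, sum_congr rfl fract_eq, ← sum_div, sum_add_distrib, sum_range_natCast, sum_const,
    card_range, nsmul_eq_mul]
  field_simp

lemma sum_range_sub_fract_add_div (hN : N ≠ 0) (x : R) :
    ∑ s ∈ range N, ((N - 1) / (2 * N) - Int.fract ((s + x) / N)) = -Int.fract x := by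
  have hNR : (N : R) ≠ 0 := Nat.cast_ne_zero.2 hN
  rw [sum_sub_distrib, sum_range_fract_add_div hN, sum_const, card_range, nsmul_eq_mul]
  field_simp
  ring

end FractionalParts

/-- `f` has the first-order expansion `f w = 1 + (w - z) • d + o(w - z)` at `z`. These are the
functions with value `1` at `z`, for which the derivative `d` is also the logarithmic derivative. -/
structure HasUnitJetAt {𝕜 A : Type*} [NontriviallyNormedField 𝕜] [NormedRing A] [NormedAlgebra 𝕜 A]
    (f : 𝕜 → A) (d : A) (z : 𝕜) : Prop where
  eq_one : f z = 1
  hasDerivAt : HasDerivAt f d z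

namespace HasUnitJetAt

variable {𝕜 : Type*} [NontriviallyNormedField 𝕜] {z : 𝕜} {ι : Type*} {S : Finset ι}

lemma mul {A : Type*} [NormedRing A] [NormedAlgebra 𝕜 A] {f g : 𝕜 → A} {d e : A}
    (hf : HasUnitJetAt f d z) (hg : HasUnitJetAt g e z) :
    HasUnitJetAt (fun w ↦ f w * g w) (d + e) z where
  eq_one := by rw [hf.eq_one, hg.eq_one, mul_one]
  hasDerivAt := by
    simpa only [hf.eq_one, hg.eq_one, mul_one, one_mul] using hf.hasDerivAt.fun_mul hg.hasDerivAt

lemma prod {A : Type*} [NormedCommRing A] [NormedAlgebra 𝕜 A] {f : ι → 𝕜 → A} {d : ι → A}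
    (hf : ∀ i ∈ S, HasUnitJetAt (f i) (d i) z) :
    HasUnitJetAt (fun w ↦ ∏ i ∈ S, f i w) (∑ i ∈ S, d i) z where
  eq_one := prod_eq_one fun i hi ↦ (hf i hi).eq_one
  hasDerivAt := by
    classical
    refine (HasDerivAt.fun_finsetProd fun i hi ↦ (hf i hi).hasDerivAt).congr_deriv ?_
    refine sum_congr rfl fun i _ ↦ ?_
    rw [prod_eq_one fun j hj ↦ (hf j (mem_of_mem_erase hj)).eq_one, one_smul]

lemma average {A : Type*} [NormedField A] [CharZero A] [NormedAlgebra 𝕜 A] {f : ι → 𝕜 → A}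
    {d : ι → A} (hS : S.Nonempty) (hf : ∀ i ∈ S, HasUnitJetAt (f i) (d i) z) :
    HasUnitJetAt (fun w ↦ (#S : A)⁻¹ * ∑ i ∈ S, f i w) ((#S : A)⁻¹ * ∑ i ∈ S, d i) z where
  eq_one := by
    rw [sum_congr rfl fun i hi ↦ (hf i hi).eq_one, sum_const, nsmul_one,
      inv_mul_cancel₀ (Nat.cast_ne_zero.2 hS.card_ne_zero)]
  hasDerivAt := (HasDerivAt.fun_sum fun i hi ↦ (hf i hi).hasDerivAt).const_mul _

lemma sub_div_sub {p : 𝕜} (hp : z ≠ p) :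
    HasUnitJetAt (fun w ↦ (z - p) / (w - p)) (-(z - p)⁻¹) z where
  eq_one := div_self (sub_ne_zero.2 hp)
  hasDerivAt := by
    have hzp : z - p ≠ 0 := sub_ne_zero.2 hp
    refine ((hasDerivAt_const z (z - p)).fun_div ((hasDerivAt_id z).sub_const p) hzp).congr_deriv ?_
    simp only [id_eq]
    field_simp
    ring

lemma cpow_const {f : ℂ → ℂ} {d z : ℂ} (hf : HasUnitJetAt f d z) (e : ℂ) :
    HasUnitJetAt (fun w ↦ f w ^ e) (e * d) z where
  eq_one := by rw [hf.eq_one, Complex.one_cpow]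
  hasDerivAt := by
    have hslit : f z ∈ Complex.slitPlane := hf.eq_one ▸ Complex.one_mem_slitPlane
    simpa only [hf.eq_one, Complex.one_cpow, mul_one] using hf.hasDerivAt.cpow_const (c := e) hslit

lemma prod_sub_div_sub_cpow {p : ι → ℂ} {z : ℂ} (hp : ∀ i ∈ S, z ≠ p i) (e : ℂ) :
    HasUnitJetAt (fun w ↦ ∏ i ∈ S, ((z - p i) / (w - p i)) ^ e)
      (e * ∑ i ∈ S, -(z - p i)⁻¹) z := by
  rw [mul_sum]
  exact prod fun i hi ↦ (sub_div_sub (hp i hi)).cpow_const e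

end HasUnitJetAt

theorem szego_em1_value_and_first_deriv_general
    {K σ : Type*} {T : Finset σ} (hT : T.Nonempty) (lam : K → ℂ) (I₁ I₂ J₁ J₂ : Finset K)
    (istar jstar : K) (z : ℂ) (hz : ∀ k, z ≠ lam k) (a b c : σ → ℂ)
    (ha : ∑ s ∈ T, a s = 0) (hb : ∑ s ∈ T, b s = 0) (hc : ∑ s ∈ T, c s = 0)
    (hplus : ℂ → ℂ)
    (hh : ∀ w, hplus w = (#T : ℂ)⁻¹ * ∑ s ∈ T,
      (∏ i ∈ I₁, ((z - lam i) / (w - lam i)) ^ a s) *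
      (∏ j ∈ J₂, ((z - lam j) / (w - lam j)) ^ (-a s)) *
      (∏ i ∈ I₂, ((z - lam i) / (w - lam i)) ^ b s) *
      (∏ j ∈ J₁, ((z - lam j) / (w - lam j)) ^ (-b s)) *
      ((z - lam istar) / (w - lam istar)) ^ c s *
      ((z - lam jstar) / (w - lam jstar)) ^ (-c s)) :
    hplus z = 1 ∧ HasDerivAt hplus 0 z := by
  have block (S : Finset K) := HasUnitJetAt.prod_sub_div_sub_cpow (S := S) fun k _ ↦ hz k
  have point (k : K) := (HasUnitJetAt.sub_div_sub (hz k)).cpow_const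
  have summand (s : σ) := (((((block I₁ (a s)).mul (block J₂ (-a s))).mul
    (block I₂ (b s))).mul (block J₁ (-b s))).mul (point istar (c s))).mul (point jstar (-c s))
  have kernel := HasUnitJetAt.average hT fun s _ ↦ summand s
  rw [← funext hh] at kernel
  refine ⟨kernel.eq_one, kernel.hasDerivAt.congr_deriv ?_⟩
  simp only [sum_add_distrib, ← sum_mul, sum_neg_distrib, ha, hb, hc, neg_zero, zero_mul, add_zero,
    mul_zero]

/-- Diagonal expansion of the algebraic Szegő kernel `S[e_{m+1}]`
(Corollary 4.4): the stripped kernel `hplus` satisfies `hplus z = 1` and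
`hplus' z = 0`, which is the vanishing (4.24) of all first partial derivatives of
`θ[e_{m+1}]` at `0`. -/
theorem szego_em1_value_and_first_deriv
    {K : Type*} [Fintype K] [DecidableEq K]
    (N : ℕ) (hN : 2 ≤ N)
    (lam : K → ℂ) (hlam : Function.Injective lam)
    (I₁ I₂ J₁ J₂ : Finset K)
    (h12 : Disjoint I₁ I₂) (h1J1 : Disjoint I₁ J₁) (h1J2 : Disjoint I₁ J₂)
    (h2J1 : Disjoint I₂ J₁) (h2J2 : Disjoint I₂ J₂) (hJ12 : Disjoint J₁ J₂)
    (istar jstar : K) (hij : istar ≠ jstar)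
    (histar : istar ∉ I₁ ∪ I₂ ∪ J₁ ∪ J₂) (hjstar : jstar ∉ I₁ ∪ I₂ ∪ J₁ ∪ J₂)
    (z : ℂ) (hz : ∀ k, z ≠ lam k)
    (a b c : ℕ → ℝ)
    (ha : ∀ s, a s = ((N : ℝ) - 1) / (2 * N) - (s : ℝ) / N)
    (hb : ∀ s, b s = ((N : ℝ) - 1) / (2 * N) - Int.fract (((s : ℝ) + 1) / N))
    (hc : ∀ s, c s = ((N : ℝ) - 1) / (2 * N) - Int.fract (((s : ℝ) + 2) / N))
    (hplus : ℂ → ℂ)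
    (hh : ∀ w, hplus w = (N : ℂ)⁻¹ * ∑ s ∈ Finset.range N,
      (∏ i ∈ I₁, ((z - lam i) / (w - lam i)) ^ ((a s : ℝ) : ℂ)) *
      (∏ j ∈ J₂, ((z - lam j) / (w - lam j)) ^ ((-(a s) : ℝ) : ℂ)) *
      (∏ i ∈ I₂, ((z - lam i) / (w - lam i)) ^ ((b s : ℝ) : ℂ)) *
      (∏ j ∈ J₁, ((z - lam j) / (w - lam j)) ^ ((-(b s) : ℝ) : ℂ)) *
      (((z - lam istar) / (w - lam istar)) ^ ((c s : ℝ) : ℂ)) *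
      (((z - lam jstar) / (w - lam jstar)) ^ ((-(c s) : ℝ) : ℂ))) :
    hplus z = 1 ∧ HasDerivAt hplus 0 z := by
  have hN0 : N ≠ 0 := by omega
  have sum_a : ∑ s ∈ range N, a s = 0 := by
    simpa only [ha] using sum_range_sub_natCast_div hN0
  have sum_b : ∑ s ∈ range N, b s = 0 := by
    simpa only [hb, Int.fract_one, neg_zero] using sum_range_sub_fract_add_div hN0 (1 : ℝ)
  have sum_c : ∑ s ∈ range N, c s = 0 := by
    simpa only [hc, Int.fract_ofNat, neg_zero] using sum_range_sub_fract_add_div hN0 (2 : ℝ)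
  exact szego_em1_value_and_first_deriv_general (nonempty_range_iff.2 hN0) lam I₁ I₂ J₁ J₂
    istar jstar z hz (a ·) (b ·) (c ·) (mod_cast sum_a) (mod_cast sum_b) (mod_cast sum_c) hplus
    (by simpa only [card_range, Complex.ofReal_neg] using hh)
end

section
/- With the notation of the context, h₊ is twice (complex-)differentiable at z and h₊''(z) = 2·φ₊(z), where φ₊(z) = ((N²−1)/(24N²))·(F₁² + F₂² + F₃²) + ((N−1)(N−5)/(12N²))·(F₁ + F₃)·F₂ + ((N²−12N+23)/(12N²))·F₁·F₃, with F₁ = Σ_{i∈I₁} (z − λ_i)^{−1} − Σ_{j∈J₂} (z − λ_j)^{−1}, F₂ = Σ_{i∈I₂} (z − λ_i)^{−1} − Σ_{j∈J₁} (z − λ_j)^{−1}, and F₃ = (z − λ_{i*})^{−1} − (z − λ_{j*})^{−1}. (This is the second-order coefficient φ[e_{m+1}] of Corollary 4.4 of the paper, in the coordinate x = λ where the Schwarzian term vanishes.) -/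
open Finset

/-!
Each factor `ψ_k(w) ^ α`, `ψ_k(w) = (z - λ_k) / (w - λ_k)`, is `1` at `w = z` and has logarithmic
derivative `-α / (w - λ_k)`. A product `f` of such factors with logarithmic derivative `L`
therefore satisfies `f'' z = L z ^ 2 + L' z`. The exponents attached to one class of branch points
run over a full period of a centred sawtooth, so they sum to zero: averaging over `s` kills `L'`
and turns `L z ^ 2` into a quadratic form in the class sums `F_r`, whose coefficients are the
autocorrelations of the sawtooth. For these, `x = {u}` and `y = {v}` satisfy
`x - y ∈ {t, t - 1}` with `t = {u - v}`, so `(x - y) ^ 2` is affine in `x - y` and its average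
over a period is `t * (1 - t)`.
-/

open scoped Topology

section SecondDerivative

variable {𝕜 : Type*} [NontriviallyNormedField 𝕜] {f g L M : 𝕜 → 𝕜} {L' v z : 𝕜}

/-- `f` has second derivative `v` at `z`: it is differentiable in a neighbourhood of `z`, and its
derivative is differentiable at `z` with derivative `v`. -/
def HasSecondDerivAt (f : 𝕜 → 𝕜) (v z : 𝕜) : Prop :=
  ∃ f' : 𝕜 → 𝕜, (∀ᶠ w in 𝓝 z, HasDerivAt f (f' w) w) ∧ HasDerivAt f' v z

theorem HasSecondDerivAt.eventually_differentiableAt (h : HasSecondDerivAt f v z) :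
    ∀ᶠ w in 𝓝 z, DifferentiableAt 𝕜 f w := by
  obtain ⟨_, hf, _⟩ := h
  exact hf.mono fun _ hw => hw.differentiableAt

theorem HasSecondDerivAt.hasDerivAt_deriv (h : HasSecondDerivAt f v z) :
    HasDerivAt (deriv f) v z := by
  obtain ⟨_, hf, hf'⟩ := h
  exact hf'.congr_of_eventuallyEq (hf.mono fun _ hw => hw.deriv)

theorem HasSecondDerivAt.const_mul (c : 𝕜) (h : HasSecondDerivAt f v z) :
    HasSecondDerivAt (fun w => c * f w) (c * v) z := by
  obtain ⟨f', hf, hf'⟩ := h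
  exact ⟨fun w => c * f' w, hf.mono fun _ hw => hw.const_mul c, hf'.const_mul c⟩

theorem HasSecondDerivAt.fun_sum {ι : Type*} {S : Finset ι} {f : ι → 𝕜 → 𝕜} {v : ι → 𝕜}
    (h : ∀ i ∈ S, HasSecondDerivAt (f i) (v i) z) :
    HasSecondDerivAt (fun w => ∑ i ∈ S, f i w) (∑ i ∈ S, v i) z := by
  choose! f' hf hf' using h
  refine ⟨fun w => ∑ i ∈ S, f' i w, ?_, HasDerivAt.fun_sum hf'⟩
  filter_upwards [(Filter.eventually_all_finset S).2 hf] with w hw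
  exact HasDerivAt.fun_sum hw

/-- `f' = f * L` in a neighbourhood of `z`, so `L` is the logarithmic derivative of `f` there;
this form needs no division by `f`. -/
def HasLogDerivNear (f L : 𝕜 → 𝕜) (z : 𝕜) : Prop :=
  ∀ᶠ w in 𝓝 z, HasDerivAt f (f w * L w) w

theorem HasLogDerivNear.fun_mul (hf : HasLogDerivNear f L z) (hg : HasLogDerivNear g M z) :
    HasLogDerivNear (fun w => f w * g w) (fun w => L w + M w) z := by
  filter_upwards [hf, hg] with w hfw hgw
  exact (hfw.mul hgw).congr_deriv (by ring)

theorem HasLogDerivNear.fun_prod {ι : Type*} {S : Finset ι} {f L : ι → 𝕜 → 𝕜}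
    (h : ∀ i ∈ S, HasLogDerivNear (f i) (L i) z) :
    HasLogDerivNear (fun w => ∏ i ∈ S, f i w) (fun w => ∑ i ∈ S, L i w) z := by
  classical
  induction S using Finset.induction_on with
  | empty => exact .of_forall fun w => by simpa using hasDerivAt_const w (1 : 𝕜)
  | insert i S hi ih =>
    rw [forall_mem_insert] at h
    simpa only [prod_insert hi, sum_insert hi] using h.1.fun_mul (ih h.2)

theorem HasLogDerivNear.hasSecondDerivAt (hf : HasLogDerivNear f L z) (hL : HasDerivAt L L' z) :
    HasSecondDerivAt f (f z * (L z ^ 2 + L')) z :=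
  ⟨fun w => f w * L w, hf, (hf.self_of_nhds.mul hL).congr_deriv (by ring)⟩

end SecondDerivative

section BranchFactor

variable {K : Type*} {lam : K → ℂ} {I J : Finset K} {z : ℂ}

/-- The logarithmic derivative `∑ i ∈ I, 1 / (w - λ i) - ∑ j ∈ J, 1 / (w - λ j)` of the rational
function with zeros `λ i`, `i ∈ I`, and poles `λ j`, `j ∈ J`; the quantities `F₁`, `F₂`, `F₃` are
of this form. -/
noncomputable def divisorLogDeriv (lam : K → ℂ) (I J : Finset K) (w : ℂ) : ℂ :=
  (∑ i ∈ I, (w - lam i)⁻¹) - ∑ j ∈ J, (w - lam j)⁻¹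

/-- The contribution `∏ i ∈ I, ψ_i(w) ^ α * ∏ j ∈ J, ψ_j(w) ^ (-α)` to the Szegő kernel of a class
of branch points carrying the exponents `±α`, where `ψ_k(w) = (z - λ k) / (w - λ k)`. -/
noncomputable def branchFactor (lam : K → ℂ) (I J : Finset K) (α z w : ℂ) : ℂ :=
  (∏ i ∈ I, ((z - lam i) / (w - lam i)) ^ α) * ∏ j ∈ J, ((z - lam j) / (w - lam j)) ^ (-α)

theorem hasLogDerivNear_sub_div_sub_cpow {l : ℂ} (hz : z ≠ l) (α : ℂ) :
    HasLogDerivNear (fun w => ((z - l) / (w - l)) ^ α) (fun w => -α * (w - l)⁻¹) z := by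
  have hzl : z - l ≠ 0 := sub_ne_zero.2 hz
  have hcont : ContinuousAt (fun w => (z - l) / (w - l)) z := by fun_prop (disch := exact hzl)
  have hslit : ∀ᶠ w in 𝓝 z, (z - l) / (w - l) ∈ Complex.slitPlane :=
    hcont.eventually_mem (Complex.isOpen_slitPlane.mem_nhds (by simp [div_self hzl]))
  filter_upwards [eventually_ne_nhds hz, hslit] with w hw hw_slit
  have hwl : w - l ≠ 0 := sub_ne_zero.2 hw
  have hψ : HasDerivAt (fun w => (z - l) / (w - l)) (-(z - l) / (w - l) ^ 2) w :=
    ((hasDerivAt_const w (z - l)).div ((hasDerivAt_id w).sub_const l) hwl).congr_deriv (by simp)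
  refine (hψ.cpow_const hw_slit).congr_deriv ?_
  rw [Complex.cpow_sub _ _ (div_ne_zero hzl hwl), Complex.cpow_one]
  field_simp

theorem hasLogDerivNear_branchFactor (hI : ∀ i ∈ I, z ≠ lam i) (hJ : ∀ j ∈ J, z ≠ lam j) (α : ℂ) :
    HasLogDerivNear (branchFactor lam I J α z) (fun w => -α * divisorLogDeriv lam I J w) z := by
  have hlog : (fun w => -α * divisorLogDeriv lam I J w) = fun w =>
      (∑ i ∈ I, -α * (w - lam i)⁻¹) + ∑ j ∈ J, - -α * (w - lam j)⁻¹ := by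
    funext w
    rw [divisorLogDeriv, ← mul_sum, ← mul_sum]
    ring
  rw [hlog]
  exact .fun_mul (.fun_prod fun i hi => hasLogDerivNear_sub_div_sub_cpow (hI i hi) α)
    (.fun_prod fun j hj => hasLogDerivNear_sub_div_sub_cpow (hJ j hj) (-α))

theorem branchFactor_self (hI : ∀ i ∈ I, z ≠ lam i) (hJ : ∀ j ∈ J, z ≠ lam j) (α : ℂ) :
    branchFactor lam I J α z z = 1 := by
  have one_cpow_of_ne {l β : ℂ} (h : z ≠ l) : ((z - l) / (z - l)) ^ β = 1 := by
    rw [div_self (sub_ne_zero.2 h), Complex.one_cpow]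
  rw [branchFactor, prod_eq_one fun i hi => one_cpow_of_ne (hI i hi),
    prod_eq_one fun j hj => one_cpow_of_ne (hJ j hj), one_mul]

theorem differentiableAt_divisorLogDeriv (hI : ∀ i ∈ I, z ≠ lam i) (hJ : ∀ j ∈ J, z ≠ lam j) :
    DifferentiableAt ℂ (divisorLogDeriv lam I J) z := by
  have differentiableAt_inv_sub {l : ℂ} (h : z ≠ l) :
      DifferentiableAt ℂ (fun w => (w - l)⁻¹) z := by
    fun_prop (disch := exact sub_ne_zero.2 h)
  exact (DifferentiableAt.fun_sum fun i hi => differentiableAt_inv_sub (hI i hi)).sub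
    (DifferentiableAt.fun_sum fun j hj => differentiableAt_inv_sub (hJ j hj))

end BranchFactor

section PeriodSums

theorem sum_range_cast (R : Type*) [Field R] [CharZero R] (n : ℕ) :
    ∑ s ∈ range n, (s : R) = n * (n - 1) / 2 := by
  induction n with
  | zero => simp
  | succ n ih => rw [sum_range_succ, ih]; push_cast; ring

theorem sum_range_cast_sq (R : Type*) [Field R] [CharZero R] (n : ℕ) :
    ∑ s ∈ range n, (s : R) ^ 2 = n * (n - 1) * (2 * n - 1) / 6 := by
  induction n with
  | zero => simp
  | succ n ih => rw [sum_range_succ, ih]; push_cast; ring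

theorem sum_range_add_of_periodic {M : Type*} [AddCommMonoid M] {f : ℤ → M} {N : ℕ}
    (hf : Function.Periodic f N) (r : ℤ) :
    ∑ s ∈ range N, f (s + r) = ∑ s ∈ range N, f s := by
  have shift_one : Function.Periodic (fun r : ℤ => ∑ s ∈ range N, f (s + r)) 1 := by
    intro r
    cases N with
    | zero => simp
    | succ n =>
      have hcomm (s : ℕ) : f (s + (r + 1)) = f ((s + 1 : ℕ) + r) := by push_cast; ring_nf
      have hwrap : f ((n + 1 : ℕ) + r) = f ((0 : ℕ) + r) := by
        rw [add_comm, hf, Nat.cast_zero, zero_add]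
      simp only [hcomm]
      rw [sum_range_succ, hwrap, ← sum_range_succ' (fun s : ℕ => f (s + r))]
  simpa using shift_one.zsmul_eq r

variable {R : Type*} [CommRing R] [LinearOrder R] [IsStrictOrderedRing R] [FloorRing R]

theorem sq_fract_sub_fract (u v : R) :
    (Int.fract u - Int.fract v) ^ 2 = Int.fract (u - v) * (1 - Int.fract (u - v)) -
      (1 - 2 * Int.fract (u - v)) * (Int.fract u - Int.fract v) := by
  have hu := Int.fract_nonneg u
  have hu' := Int.fract_lt_one u
  have hv := Int.fract_nonneg v
  have hv' := Int.fract_lt_one v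
  rcases le_or_gt (Int.fract v) (Int.fract u) with h | h
  · have ht : Int.fract (u - v) = Int.fract u - Int.fract v :=
      Int.fract_eq_iff.2 ⟨by linarith, by linarith, ⌊u⌋ - ⌊v⌋, by
        push_cast; unfold Int.fract; ring⟩
    rw [ht]; ring
  · have ht : Int.fract (u - v) = Int.fract u - Int.fract v + 1 :=
      Int.fract_eq_iff.2 ⟨by linarith, by linarith, ⌊u⌋ - ⌊v⌋ - 1, by
        push_cast; unfold Int.fract; ring⟩
    rw [ht]; ring

theorem fract_neg_mul_one_sub_fract_neg (x : R) :
    Int.fract (-x) * (1 - Int.fract (-x)) = Int.fract x * (1 - Int.fract x) := by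
  by_cases h : Int.fract x = 0
  · rw [Int.fract_neg_eq_zero.2 h, h]
  · rw [Int.fract_neg h]
    ring

theorem fract_mul_one_sub_fract_of_le_one {x : R} (hx₀ : 0 ≤ x) (hx₁ : x ≤ 1) :
    Int.fract x * (1 - Int.fract x) = x * (1 - x) := by
  rcases hx₁.lt_or_eq with h | rfl
  · rw [Int.fract_eq_self.2 ⟨hx₀, h⟩]
  · simp

end PeriodSums

section SzegoExponents

variable {N : ℕ}

/-- The exponent `(N - 1) / (2 N) - {n / N}` of the Szegő kernel of a `Z_N` curve, as a function
on `ℤ`: the families `a`, `b`, `c` are its values at `s`, `s + 1`, `s + 2` for `0 ≤ s < N`. -/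
noncomputable def szegoExponent (N : ℕ) (n : ℤ) : ℝ :=
  ((N : ℝ) - 1) / (2 * N) - Int.fract ((n : ℝ) / N)

/-- The mean of `szegoExponent N s * szegoExponent N (s + d)` over a period, in closed form; see
`sum_szegoExponent_mul_szegoExponent`. -/
noncomputable def szegoCorrelation (N : ℕ) (d : ℤ) : ℝ :=
  ((N : ℝ) ^ 2 - 1) / (12 * N ^ 2) - Int.fract ((d : ℝ) / N) * (1 - Int.fract ((d : ℝ) / N)) / 2

theorem szegoExponent_periodic (hN : N ≠ 0) : Function.Periodic (szegoExponent N) N := by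
  intro n
  have hN' : (N : ℝ) ≠ 0 := Nat.cast_ne_zero.2 hN
  rw [szegoExponent, szegoExponent]
  push_cast
  rw [add_div, div_self hN', Int.fract_add_one]

theorem szegoExponent_natCast_of_lt {s : ℕ} (hs : s < N) :
    szegoExponent N s = ((N : ℝ) - 1) / (2 * N) - (s : ℝ) / N := by
  rw [szegoExponent, Int.cast_natCast, Int.fract_div_natCast_eq_div_natCast_mod,
    Nat.mod_eq_of_lt hs]

theorem sum_szegoExponent (hN : N ≠ 0) (r : ℤ) :
    ∑ s ∈ range N, szegoExponent N (s + r) = 0 := by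
  have hN' : (N : ℝ) ≠ 0 := Nat.cast_ne_zero.2 hN
  rw [sum_range_add_of_periodic (szegoExponent_periodic hN) r,
    sum_congr rfl fun s hs => szegoExponent_natCast_of_lt (mem_range.1 hs),
    sum_sub_distrib, ← sum_div (range N) (fun s : ℕ => (s : ℝ)), sum_range_cast, sum_const,
    card_range, nsmul_eq_mul]
  field_simp
  ring

theorem sum_szegoExponent_sq (hN : N ≠ 0) (r : ℤ) :
    ∑ s ∈ range N, szegoExponent N (s + r) ^ 2 = ((N : ℝ) ^ 2 - 1) / (12 * N) := by
  have hN' : (N : ℝ) ≠ 0 := Nat.cast_ne_zero.2 hN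
  have hsq (s : ℕ) (hs : s ∈ range N) : szegoExponent N s ^ 2 =
      (((N : ℝ) - 1) / (2 * N)) ^ 2 - ((N : ℝ) - 1) / N ^ 2 * s + 1 / (N : ℝ) ^ 2 * s ^ 2 := by
    rw [szegoExponent_natCast_of_lt (mem_range.1 hs)]
    field_simp
    ring
  rw [sum_range_add_of_periodic (f := fun n => szegoExponent N n ^ 2)
      ((szegoExponent_periodic hN).comp (· ^ 2)) r,
    sum_congr rfl hsq, sum_add_distrib, sum_sub_distrib, ← mul_sum, ← mul_sum,
    sum_range_cast, sum_range_cast_sq, sum_const, card_range, nsmul_eq_mul]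
  field_simp
  ring

theorem sq_szegoExponent_sub_szegoExponent (N : ℕ) (m n : ℤ) :
    (szegoExponent N m - szegoExponent N n) ^ 2 =
      Int.fract (((m - n : ℤ) : ℝ) / N) * (1 - Int.fract (((m - n : ℤ) : ℝ) / N)) +
      (1 - 2 * Int.fract (((m - n : ℤ) : ℝ) / N)) * (szegoExponent N m - szegoExponent N n) := by
  have h := sq_fract_sub_fract ((m : ℝ) / N) ((n : ℝ) / N)
  rw [← sub_div, ← Int.cast_sub] at h
  unfold szegoExponent
  linear_combination h

theorem sum_szegoExponent_mul_szegoExponent (hN : N ≠ 0) (r r' : ℤ) :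
    ∑ s ∈ range N, szegoExponent N (s + r) * szegoExponent N (s + r') =
      N * szegoCorrelation N (r - r') := by
  have hN' : (N : ℝ) ≠ 0 := Nat.cast_ne_zero.2 hN
  set t := Int.fract (((r - r' : ℤ) : ℝ) / N) with ht
  have hsq (s : ℕ) : (szegoExponent N (s + r) - szegoExponent N (s + r')) ^ 2 =
      t * (1 - t) + (1 - 2 * t) * (szegoExponent N (s + r) - szegoExponent N (s + r')) := by
    rw [sq_szegoExponent_sub_szegoExponent, add_sub_add_left_eq_sub]
  have hpolar (s : ℕ) : szegoExponent N (s + r) * szegoExponent N (s + r') =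
      (szegoExponent N (s + r) ^ 2 + szegoExponent N (s + r') ^ 2 - t * (1 - t) -
        (1 - 2 * t) * (szegoExponent N (s + r) - szegoExponent N (s + r'))) / 2 := by
    linear_combination -hsq s / 2
  simp only [hpolar, ← sum_div, sum_sub_distrib, sum_add_distrib, ← mul_sum,
    sum_szegoExponent hN, sum_szegoExponent_sq hN, sum_const, card_range, nsmul_eq_mul]
  rw [szegoCorrelation, ← ht]
  field_simp
  ring

theorem szegoCorrelation_neg (N : ℕ) (d : ℤ) : szegoCorrelation N (-d) = szegoCorrelation N d := by
  rw [szegoCorrelation, Int.cast_neg, neg_div, fract_neg_mul_one_sub_fract_neg, szegoCorrelation]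

theorem szegoCorrelation_natCast_of_le (hN : N ≠ 0) {d : ℕ} (hd : d ≤ N) :
    szegoCorrelation N d =
      ((N : ℝ) ^ 2 - 1) / (12 * N ^ 2) - (d : ℝ) * (N - d) / (2 * N ^ 2) := by
  have hN' : (N : ℝ) ≠ 0 := Nat.cast_ne_zero.2 hN
  have hdN : (d : ℝ) / N ≤ 1 := div_le_one_of_le₀ (Nat.cast_le.2 hd) N.cast_nonneg
  rw [szegoCorrelation, Int.cast_natCast, fract_mul_one_sub_fract_of_le_one (by positivity) hdN]
  field_simp

end SzegoExponents

section SzegoKernel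

variable {K ι : Type*} [Fintype ι]

/-- The Szegő kernel of a `Z_N` curve, stripped of its universal factor, for a family of classes of
branch points: those in `I r` and `J r` carry the exponents `± szegoExponent N (s + ρ r)`. -/
noncomputable def szegoKernel (N : ℕ) (lam : K → ℂ) (I J : ι → Finset K) (ρ : ι → ℤ) (z w : ℂ) :
    ℂ :=
  (N : ℂ)⁻¹ * ∑ s ∈ range N, ∏ r, branchFactor lam (I r) (J r) (szegoExponent N (s + ρ r)) z w

/-- The quadratic form in the class sums `F r` with coefficients `szegoCorrelation`. -/
noncomputable def szegoForm (N : ℕ) (ρ : ι → ℤ) (F : ι → ℂ) : ℂ :=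
  ∑ r, ∑ r', (szegoCorrelation N (ρ r - ρ r') : ℂ) * F r * F r'

theorem mean_sq_sum_szegoExponent_mul {N : ℕ} (hN : N ≠ 0) (ρ : ι → ℤ) (F : ι → ℂ) :
    (N : ℂ)⁻¹ * ∑ s ∈ range N, (∑ r, (szegoExponent N (s + ρ r) : ℂ) * F r) ^ 2 =
      szegoForm N ρ F := by
  have hN' : (N : ℂ) ≠ 0 := Nat.cast_ne_zero.2 hN
  have hcorr (r r' : ι) : ∑ s ∈ range N,
      (szegoExponent N (s + ρ r) : ℂ) * szegoExponent N (s + ρ r') =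
        N * szegoCorrelation N (ρ r - ρ r') := by
    exact_mod_cast sum_szegoExponent_mul_szegoExponent hN (ρ r) (ρ r')
  have hexpand : ∑ s ∈ range N, (∑ r, (szegoExponent N (s + ρ r) : ℂ) * F r) ^ 2 =
      ∑ r, ∑ r', (∑ s ∈ range N,
        (szegoExponent N (s + ρ r) : ℂ) * szegoExponent N (s + ρ r')) * (F r * F r') := by
    simp_rw [sq, sum_mul_sum]
    rw [sum_comm]
    refine sum_congr rfl fun r _ => ?_
    rw [sum_comm]
    simp only [sum_mul]
    exact sum_congr rfl fun r' _ => sum_congr rfl fun s _ => mul_mul_mul_comm ..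
  rw [hexpand]
  simp only [hcorr, szegoForm, mul_sum, mul_assoc, inv_mul_cancel_left₀ hN']

theorem sum_sum_szegoExponent_mul {N : ℕ} (hN : N ≠ 0) (ρ : ι → ℤ) (F : ι → ℂ) :
    ∑ s ∈ range N, ∑ r, (szegoExponent N (s + ρ r) : ℂ) * F r = 0 := by
  have hzero (r : ι) : ∑ s ∈ range N, (szegoExponent N (s + ρ r) : ℂ) = 0 := by
    exact_mod_cast sum_szegoExponent hN (ρ r)
  rw [sum_comm]
  simp only [← sum_mul, hzero, zero_mul, sum_const_zero]

theorem szegoForm_three {N : ℕ} (hN : 2 ≤ N) (F₁ F₂ F₃ : ℂ) :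
    szegoForm N ![0, 1, 2] ![F₁, F₂, F₃] =
      2 * ((((N : ℂ) ^ 2 - 1) / (24 * (N : ℂ) ^ 2)) * (F₁ ^ 2 + F₂ ^ 2 + F₃ ^ 2) +
        (((N : ℂ) - 1) * ((N : ℂ) - 5) / (12 * (N : ℂ) ^ 2)) * (F₁ + F₃) * F₂ +
        (((N : ℂ) ^ 2 - 12 * N + 23) / (12 * (N : ℂ) ^ 2)) * F₁ * F₃) := by
  have hN' : (N : ℂ) ≠ 0 := Nat.cast_ne_zero.2 (by omega)
  have hcorr (d : ℕ) (hd : d ≤ 2) : (szegoCorrelation N d : ℂ) =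
      ((N : ℂ) ^ 2 - 1) / (12 * N ^ 2) - d * (N - d) / (2 * N ^ 2) := by
    rw [szegoCorrelation_natCast_of_le (by omega) (hd.trans hN)]
    push_cast
    rfl
  have hexpand : szegoForm N ![0, 1, 2] ![F₁, F₂, F₃] =
      szegoCorrelation N (0 : ℕ) * (F₁ ^ 2 + F₂ ^ 2 + F₃ ^ 2) +
        2 * szegoCorrelation N (1 : ℕ) * (F₁ + F₃) * F₂ +
        2 * szegoCorrelation N (2 : ℕ) * F₁ * F₃ := by
    simp only [szegoForm, Fin.sum_univ_three, Matrix.cons_val_zero, Matrix.cons_val_one,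
      Matrix.cons_val, sub_self, sub_zero, zero_sub, Int.reduceSub, Int.reduceNeg,
      szegoCorrelation_neg, Nat.cast_zero, Nat.cast_one, Nat.cast_ofNat]
    ring
  rw [hexpand, hcorr 0 (by norm_num), hcorr 1 (by norm_num), hcorr 2 le_rfl]
  push_cast
  field_simp
  ring

theorem szego_em1_second_deriv_general {N : ℕ} (hN : N ≠ 0) {lam : K → ℂ} {I J : ι → Finset K}
    (ρ : ι → ℤ) {z : ℂ} (hI : ∀ r, ∀ i ∈ I r, z ≠ lam i) (hJ : ∀ r, ∀ j ∈ J r, z ≠ lam j) :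
    HasSecondDerivAt (szegoKernel N lam I J ρ z)
      (szegoForm N ρ fun r => divisorLogDeriv lam (I r) (J r) z) z := by
  set F : ι → ℂ := fun r => divisorLogDeriv lam (I r) (J r) z
  set F' : ι → ℂ := fun r => deriv (divisorLogDeriv lam (I r) (J r)) z
  have hF (r : ι) : HasDerivAt (divisorLogDeriv lam (I r) (J r)) (F' r) z :=
    (differentiableAt_divisorLogDeriv (hI r) (hJ r)).hasDerivAt
  have hsummand (s : ℕ) : HasSecondDerivAt
      (fun w => ∏ r, branchFactor lam (I r) (J r) (szegoExponent N (s + ρ r)) z w)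
      ((∑ r, (szegoExponent N (s + ρ r) : ℂ) * F r) ^ 2 -
        ∑ r, (szegoExponent N (s + ρ r) : ℂ) * F' r) z := by
    have hlog := HasLogDerivNear.fun_prod fun r (_ : r ∈ univ) =>
      hasLogDerivNear_branchFactor (hI r) (hJ r) (szegoExponent N (s + ρ r))
    convert hlog.hasSecondDerivAt (HasDerivAt.fun_sum fun r _ => (hF r).const_mul _) using 1
    simp only [branchFactor_self (hI _) (hJ _), prod_const_one, one_mul, neg_mul, sum_neg_distrib,
      neg_sq, sub_eq_add_neg, F]
  have hmean := (HasSecondDerivAt.fun_sum fun s (_ : s ∈ range N) => hsummand s).const_mul (N : ℂ)⁻¹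
  rwa [sum_sub_distrib, sum_sum_szegoExponent_mul hN, sub_zero,
    mean_sq_sum_szegoExponent_mul hN] at hmean

end SzegoKernel

/-- Second-order coefficient in the diagonal expansion of the algebraic Szegő
kernel `S[e_{m+1}]` (Corollary 4.4): `hplus` is twice differentiable at `z` and
`hplus'' z = 2 φ[e_{m+1}](z)` in the coordinate `x = λ`. -/
theorem szego_em1_second_deriv
    {K : Type*} [Fintype K] [DecidableEq K]
    (N : ℕ) (hN : 2 ≤ N)
    (lam : K → ℂ) (hlam : Function.Injective lam)
    (I₁ I₂ J₁ J₂ : Finset K)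
    (h12 : Disjoint I₁ I₂) (h1J1 : Disjoint I₁ J₁) (h1J2 : Disjoint I₁ J₂)
    (h2J1 : Disjoint I₂ J₁) (h2J2 : Disjoint I₂ J₂) (hJ12 : Disjoint J₁ J₂)
    (istar jstar : K) (hij : istar ≠ jstar)
    (histar : istar ∉ I₁ ∪ I₂ ∪ J₁ ∪ J₂) (hjstar : jstar ∉ I₁ ∪ I₂ ∪ J₁ ∪ J₂)
    (z : ℂ) (hz : ∀ k, z ≠ lam k)
    (a b c : ℕ → ℝ)
    (ha : ∀ s, a s = ((N : ℝ) - 1) / (2 * N) - (s : ℝ) / N)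
    (hb : ∀ s, b s = ((N : ℝ) - 1) / (2 * N) - Int.fract (((s : ℝ) + 1) / N))
    (hc : ∀ s, c s = ((N : ℝ) - 1) / (2 * N) - Int.fract (((s : ℝ) + 2) / N))
    (hplus : ℂ → ℂ)
    (hh : ∀ w, hplus w = (N : ℂ)⁻¹ * ∑ s ∈ Finset.range N,
      (∏ i ∈ I₁, ((z - lam i) / (w - lam i)) ^ ((a s : ℝ) : ℂ)) *
      (∏ j ∈ J₂, ((z - lam j) / (w - lam j)) ^ ((-(a s) : ℝ) : ℂ)) *
      (∏ i ∈ I₂, ((z - lam i) / (w - lam i)) ^ ((b s : ℝ) : ℂ)) *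
      (∏ j ∈ J₁, ((z - lam j) / (w - lam j)) ^ ((-(b s) : ℝ) : ℂ)) *
      (((z - lam istar) / (w - lam istar)) ^ ((c s : ℝ) : ℂ)) *
      (((z - lam jstar) / (w - lam jstar)) ^ ((-(c s) : ℝ) : ℂ)))
    (F₁ F₂ F₃ : ℂ)
    (hF₁ : F₁ = (∑ i ∈ I₁, (z - lam i)⁻¹) - ∑ j ∈ J₂, (z - lam j)⁻¹)
    (hF₂ : F₂ = (∑ i ∈ I₂, (z - lam i)⁻¹) - ∑ j ∈ J₁, (z - lam j)⁻¹)
    (hF₃ : F₃ = (z - lam istar)⁻¹ - (z - lam jstar)⁻¹) :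
    (∀ᶠ w in nhds z, DifferentiableAt ℂ hplus w) ∧
    DifferentiableAt ℂ (deriv hplus) z ∧
    deriv (deriv hplus) z =
      2 * ((((N : ℂ) ^ 2 - 1) / (24 * (N : ℂ) ^ 2)) * (F₁ ^ 2 + F₂ ^ 2 + F₃ ^ 2) +
        (((N : ℂ) - 1) * ((N : ℂ) - 5) / (12 * (N : ℂ) ^ 2)) * (F₁ + F₃) * F₂ +
        (((N : ℂ) ^ 2 - 12 * N + 23) / (12 * (N : ℂ) ^ 2)) * F₁ * F₃) := by
  have hkernel : hplus =
      szegoKernel N lam ![I₁, I₂, {istar}] ![J₂, J₁, {jstar}] ![0, 1, 2] z := by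
    funext w
    rw [hh, szegoKernel]
    congr 1
    refine sum_congr rfl fun s hs => ?_
    have ha' : szegoExponent N s = a s := by
      rw [ha, szegoExponent_natCast_of_lt (mem_range.1 hs)]
    have hb' : szegoExponent N (s + 1) = b s := by simp [hb, szegoExponent]
    have hc' : szegoExponent N (s + 2) = c s := by simp [hc, szegoExponent]
    simp [Fin.prod_univ_three, branchFactor, ha', hb', hc', mul_assoc]
  have hsecond := szego_em1_second_deriv_general (N := N) (lam := lam) (by omega)
    (I := ![I₁, I₂, {istar}]) (J := ![J₂, J₁, {jstar}]) ![0, 1, 2]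
    (fun _ i _ => hz i) (fun _ j _ => hz j)
  have hform : (fun r => divisorLogDeriv lam (![I₁, I₂, {istar}] r) (![J₂, J₁, {jstar}] r) z) =
      ![F₁, F₂, F₃] := by
    funext r
    fin_cases r <;> simp [divisorLogDeriv, hF₁, hF₂, hF₃]
  rw [← hkernel, hform, szegoForm_three hN] at hsecond
  exact ⟨hsecond.eventually_differentiableAt, hsecond.hasDerivAt_deriv.differentiableAt,
    hsecond.hasDerivAt_deriv.deriv⟩
end
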